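/- arXiv:2009.01999 — 5 statements merged into one kernel-verified Lean document; each statement's English description precedes it below -/
import Mathlib

section
/- Let 0<m<L, and for each integer j let Γ_j = [(2j−2)L+m, 2jL−m]. Then for every (ρ,z) with ρ>0, the renormalized sequence S_n(ρ,z) = Σ_{j=−n}^{n} U_{Γ_j}(ρ,z) + 2(1 − m/L) log n (n ≥ 1) converges to a finite limit u(ρ,z) as n → ∞. -/
open Filter Topology

/-- Interval potential of the segment `[a,b]` on the `z`-axis. -/
noncomputable def intervalPotential (a b ρ z : ℝ) : ℝ :=
  Real.log (Real.sqrt (ρ ^ 2 + (z - a) ^ 2) - (z - a)) -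
    Real.log (Real.sqrt (ρ ^ 2 + (z - b) ^ 2) - (z - b))

lemma pot_eq (a b ρ z : ℝ) (hρ : 0 < ρ) : intervalPotential a b ρ z =
    Real.arsinh ((a - z) / ρ) - Real.arsinh ((b - z) / ρ) := by
  have key : ∀ x : ℝ, Real.log (Real.sqrt (ρ ^ 2 + (z - x) ^ 2) - (z - x)) =
      Real.log ρ + Real.arsinh ((x - z) / ρ) := by
    intro x
    have h1 : Real.sqrt (ρ ^ 2 + (z - x) ^ 2) = ρ * Real.sqrt (1 + ((x - z) / ρ) ^ 2) := by
      rw [show ρ ^ 2 + (z - x) ^ 2 = ρ ^ 2 * (1 + ((x - z) / ρ) ^ 2) by field_simp; ring,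
        Real.sqrt_mul (by positivity), Real.sqrt_sq hρ.le]
    have h2 : Real.sqrt (ρ ^ 2 + (z - x) ^ 2) - (z - x) =
        ρ * ((x - z) / ρ + Real.sqrt (1 + ((x - z) / ρ) ^ 2)) := by
      rw [h1]; field_simp; ring
    have h3 : (x - z) / ρ + Real.sqrt (1 + ((x - z) / ρ) ^ 2) ≠ 0 := by
      rw [← Real.exp_arsinh]; exact (Real.exp_pos _).ne'
    rw [h2, Real.log_mul hρ.ne' h3, Real.arsinh]
  rw [intervalPotential, key, key]; ring

lemma arsinh_bound (C K c d : ℝ) (hC : 0 ≤ C) (hK : 0 < K) (hKC : 2 * C ≤ K)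
    (hc : c ∈ Set.Icc (K - C) (K + C)) (hd : d ∈ Set.Icc (K - C) (K + C)) :
    ‖Real.arsinh c - Real.arsinh d - (c - d) / K‖ ≤ 2 * (1 + C) / K ^ 2 * ‖c - d‖ := by
  have h := (convex_Icc (K - C) (K + C)).norm_image_sub_le_of_norm_hasDerivWithin_le
    (f := fun t => Real.arsinh t - t / K) (f' := fun t => (Real.sqrt (1 + t ^ 2))⁻¹ - 1 / K)
    (C := 2 * (1 + C) / K ^ 2)
    (fun t _ => ((Real.hasDerivAt_arsinh t).sub ((hasDerivAt_id t).div_const K)).hasDerivWithinAt)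
    (by
      rintro t ⟨ht1, ht2⟩
      have ht : 0 ≤ t := by linarith
      have hs1 : t ≤ Real.sqrt (1 + t ^ 2) := Real.le_sqrt_of_sq_le (by linarith)
      have hs2 : Real.sqrt (1 + t ^ 2) ≤ 1 + t := Real.sqrt_le_iff.2 ⟨by linarith, by nlinarith⟩
      set s := Real.sqrt (1 + t ^ 2)
      have hs : K / 2 ≤ s := by linarith
      have hs0 : 0 < s := by linarith
      have e : s⁻¹ - 1 / K = (K - s) / (s * K) := by field_simp
      rw [e, Real.norm_eq_abs, abs_div, abs_of_pos (mul_pos hs0 hK)]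
      have h1 : |K - s| ≤ 1 + C := abs_le.2 ⟨by linarith, by linarith⟩
      have h2 : K ^ 2 / 2 ≤ s * K := by nlinarith
      calc |K - s| / (s * K) ≤ (1 + C) / (K ^ 2 / 2) := by gcongr
        _ = _ := by field_simp) hd hc
  have e : Real.arsinh c - Real.arsinh d - (c - d) / K =
      (Real.arsinh c - c / K) - (Real.arsinh d - d / K) := by ring
  rw [e]
  exact h

lemma summable_diff (α β κ : ℝ) (hκ : 0 < κ) : Summable (fun k : ℕ =>
    Real.arsinh (κ * (k + 1) + α) - Real.arsinh (κ * (k + 1) + β) - (α - β) / (κ * (k + 1))) := by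
  set C := |α| + |β| with hCdef
  have hC : 0 ≤ C := by positivity
  have hs : Summable (fun k : ℕ => (2 * (1 + C) / κ ^ 2 * |α - β|) * (1 / ((k : ℝ) + 1) ^ 2)) := by
    apply Summable.mul_left
    have := (summable_nat_add_iff 1).2 (Real.summable_one_div_nat_pow.2 (one_lt_two : 1 < 2))
    simpa using this
  refine Summable.of_norm_bounded_eventually_nat hs ?_
  obtain ⟨N, hN⟩ := exists_nat_gt (2 * C / κ)
  filter_upwards [eventually_ge_atTop N] with k hk
  have hk' : (N : ℝ) ≤ k := by exact_mod_cast hk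
  have hK : 0 < κ * ((k : ℝ) + 1) := by positivity
  have h2 : 2 * C ≤ κ * ((k : ℝ) + 1) := by
    rw [div_lt_iff₀ hκ] at hN
    nlinarith
  have ha := abs_le.1 (le_refl |α|)
  have hb := abs_le.1 (le_refl |β|)
  have := abs_nonneg α
  have := abs_nonneg β
  have h := arsinh_bound C (κ * (k + 1)) (κ * (k + 1) + α) (κ * (k + 1) + β) hC hK h2
    ⟨by linarith, by linarith⟩ ⟨by linarith, by linarith⟩
  rw [add_sub_add_left_eq_sub] at h
  refine h.trans (le_of_eq ?_)
  rw [Real.norm_eq_abs]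
  field_simp

lemma sum_sym (f : ℤ → ℝ) (n : ℕ) : ∑ j ∈ Finset.Icc (-(n : ℤ)) (n : ℤ), f j =
    f 0 + ∑ k ∈ Finset.range n, (f ((k : ℤ) + 1) + f (-((k : ℤ) + 1))) := by
  induction n with
  | zero => simp
  | succ n ih =>
    have : Finset.Icc (-((n + 1 : ℕ) : ℤ)) ((n + 1 : ℕ) : ℤ) =
        insert ((n : ℤ) + 1) (insert (-((n : ℤ) + 1)) (Finset.Icc (-(n : ℤ)) (n : ℤ))) := by
      ext x
      simp only [Finset.mem_Icc, Finset.mem_insert]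
      omega
    rw [this, Finset.sum_insert, Finset.sum_insert, ih, Finset.sum_range_succ]
    · ring
    · simp only [Finset.mem_Icc]; omega
    · simp only [Finset.mem_Icc, Finset.mem_insert]; omega

/-- Convergence of the renormalized sum of rod potentials for the string of black rings:
the rods are `Γ_j = [(2j−2)L+m, 2jL−m]` and the renormalization term is `2(1−m/L) log n`. -/
theorem blackRings_renormalized_sum_converges (L m : ℝ) (hm : 0 < m) (hmL : m < L)
    (ρ z : ℝ) (hρ : 0 < ρ) :
    ∃ u : ℝ, Tendsto
      (fun n : ℕ =>
        (∑ j ∈ Finset.Icc (-(n : ℤ)) (n : ℤ),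
          intervalPotential ((2 * (j : ℝ) - 2) * L + m) (2 * (j : ℝ) * L - m) ρ z)
          + 2 * (1 - m / L) * Real.log n)
      atTop (𝓝 u) := by
  have hL : 0 < L := hm.trans hmL
  have s1 := summable_diff ((m - 2 * L - z) / ρ) ((-m - z) / ρ) (2 * L / ρ) (by positivity)
  have s2 := summable_diff ((m + z) / ρ) ((2 * L - m + z) / ρ) (2 * L / ρ) (by positivity)
  have t := (s1.add s2).hasSum.tendsto_sum_nat
  have g := Real.tendsto_harmonic_sub_log.const_mul (2 * (1 - m / L))
  refine ⟨_, ((t.sub g).const_add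
    (intervalPotential ((2 * ((0 : ℤ) : ℝ) - 2) * L + m) (2 * ((0 : ℤ) : ℝ) * L - m) ρ z)).congr ?_⟩
  intro n
  rw [sum_sym]
  have hh : ((harmonic n : ℚ) : ℝ) = ∑ k ∈ Finset.range n, ((k : ℝ) + 1)⁻¹ := by
    simp [harmonic]
  rw [hh, mul_sub, Finset.mul_sum, ← sub_add, ← Finset.sum_sub_distrib, add_assoc]
  congr 2
  refine Finset.sum_congr rfl fun k _ => ?_
  have hk : (0 : ℝ) < (k : ℝ) + 1 := by positivity
  rw [pot_eq _ _ _ _ hρ, pot_eq _ _ _ _ hρ]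
  push_cast
  have e1 : ((2 * ((k : ℝ) + 1) - 2) * L + m - z) / ρ =
    2 * L / ρ * (k + 1) + (m - 2 * L - z) / ρ := by ring
  have e2 : (2 * ((k : ℝ) + 1) * L - m - z) / ρ =
    2 * L / ρ * (k + 1) + (-m - z) / ρ := by ring
  have e3 : ((2 * (-((k : ℝ) + 1)) - 2) * L + m - z) / ρ =
    -(2 * L / ρ * (k + 1) + (2 * L - m + z) / ρ) := by ring
  have e4 : (2 * (-((k : ℝ) + 1)) * L - m - z) / ρ =
    -(2 * L / ρ * (k + 1) + (m + z) / ρ) := by ring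
  rw [e1, e2, e3, e4, Real.arsinh_neg, Real.arsinh_neg]
  have e5 : ((m - 2 * L - z) / ρ - (-m - z) / ρ) / (2 * L / ρ * ((k : ℝ) + 1)) =
    -(1 - m / L) * ((k : ℝ) + 1)⁻¹ := by field_simp; ring
  have e6 : ((m + z) / ρ - (2 * L - m + z) / ρ) / (2 * L / ρ * ((k : ℝ) + 1)) =
    -(1 - m / L) * ((k : ℝ) + 1)⁻¹ := by field_simp; ring
  rw [e5, e6]
  ring
end

section
/- Let 0<m<L, Γ_j = [(2j−2)L+m, 2jL−m] for j∈ℤ, and let u(ρ,z) = lim_{n→∞} ( Σ_{j=−n}^{n} U_{Γ_j}(ρ,z) + 2(1 − m/L) log n ) be the renormalized potential of the string of black rings. Then u is periodic in z with period 2L: u(ρ, z+2L) = u(ρ,z) for all ρ>0 and z∈ℝ. -/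
open Filter Topology

lemma aux_arsinh (c : ℝ) (hc : 0 < c) :
    Tendsto (fun x : ℝ => Real.arsinh x - Real.arsinh (x + c)) atTop (𝓝 0) := by
  have hlim : Tendsto (fun x : ℝ => -(c * x⁻¹)) atTop (𝓝 0) := by
    simpa using (tendsto_inv_atTop_zero.const_mul c).neg
  refine tendsto_of_tendsto_of_tendsto_of_le_of_le' hlim tendsto_const_nhds ?_ ?_
  · filter_upwards [eventually_gt_atTop 0] with x hx
    obtain ⟨t, ht, hd⟩ := exists_hasDerivAt_eq_slope Real.arsinh (fun t => (√(1 + t ^ 2))⁻¹)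
      (show x < x + c by linarith) Real.continuous_arsinh.continuousOn
      (fun t _ => Real.hasDerivAt_arsinh t)
    have h1 : x ≤ √(1 + t ^ 2) := by
      apply Real.le_sqrt_of_sq_le
      nlinarith [ht.1]
    have h2 : (√(1 + t ^ 2))⁻¹ ≤ x⁻¹ := by gcongr
    have h3 : Real.arsinh (x + c) - Real.arsinh x = c * (√(1 + t ^ 2))⁻¹ := by
      rw [hd, add_sub_cancel_left]; field_simp
    have h4 := mul_le_mul_of_nonneg_left h2 hc.le
    linarith
  · filter_upwards with x
    have : Real.arsinh x ≤ Real.arsinh (x + c) := Real.arsinh_le_arsinh.2 (by linarith)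
    linarith

lemma aux_log (ρ w : ℝ) (hρ : 0 < ρ) :
    Real.log (√(ρ ^ 2 + w ^ 2) - w) = Real.log ρ - Real.arsinh (w / ρ) := by
  have h1 : √(ρ ^ 2 + w ^ 2) = ρ * √(1 + (-(w / ρ)) ^ 2) := by
    rw [show ρ ^ 2 + w ^ 2 = ρ ^ 2 * (1 + (-(w / ρ)) ^ 2) by field_simp,
      Real.sqrt_mul (by positivity), Real.sqrt_sq hρ.le]
  have h2 : √(ρ ^ 2 + w ^ 2) - w = ρ * Real.exp (Real.arsinh (-(w / ρ))) := by
    rw [Real.exp_arsinh, h1]; field_simp; ring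
  rw [h2, Real.log_mul hρ.ne' (Real.exp_pos _).ne', Real.log_exp, Real.arsinh_neg]; ring

lemma aux_U (a b ρ z : ℝ) (hρ : 0 < ρ) :
    intervalPotential a b ρ z = Real.arsinh ((z - b) / ρ) - Real.arsinh ((z - a) / ρ) := by
  unfold intervalPotential
  rw [aux_log _ _ hρ, aux_log _ _ hρ]; ring

lemma aux_sum (f : ℤ → ℝ) (n : ℕ) :
    ∑ j ∈ Finset.Icc (-(n : ℤ)) (n : ℤ), f (j - 1)
      = ∑ j ∈ Finset.Icc (-(n : ℤ)) (n : ℤ), f j + (f (-(n : ℤ) - 1) - f n) := by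
  induction n with
  | zero => simp
  | succ n ih =>
    have h : Finset.Icc (-((n + 1 : ℕ) : ℤ)) ((n + 1 : ℕ) : ℤ)
        = insert ((n : ℤ) + 1) (insert (-(n : ℤ) - 1) (Finset.Icc (-(n : ℤ)) (n : ℤ))) := by
      ext x; simp only [Finset.mem_insert, Finset.mem_Icc]; omega
    have h1 : ((n : ℤ) + 1) ∉ insert (-(n : ℤ) - 1) (Finset.Icc (-(n : ℤ)) (n : ℤ)) := by
      simp only [Finset.mem_insert, Finset.mem_Icc]; omega
    have h2 : (-(n : ℤ) - 1) ∉ Finset.Icc (-(n : ℤ)) (n : ℤ) := by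
      simp only [Finset.mem_Icc]; omega
    rw [h, Finset.sum_insert h1, Finset.sum_insert h2, Finset.sum_insert h1,
      Finset.sum_insert h2, ih]
    have e1 : (-((n + 1 : ℕ) : ℤ) - 1) = -(n : ℤ) - 1 - 1 := by push_cast; ring
    have e2 : ((n + 1 : ℕ) : ℤ) = (n : ℤ) + 1 := by push_cast; ring
    have e3 : (n : ℤ) + 1 - 1 = n := by ring
    rw [e1, e2, e3]; ring

/-- The renormalized black-ring potential `u` is `2L`-periodic in `z`. -/
theorem blackRings_potential_periodic (L m : ℝ) (hm : 0 < m) (hmL : m < L)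
    (u : ℝ → ℝ → ℝ)
    (hu : ∀ ρ z : ℝ, 0 < ρ → Tendsto
      (fun n : ℕ =>
        (∑ j ∈ Finset.Icc (-(n : ℤ)) (n : ℤ),
          intervalPotential ((2 * (j : ℝ) - 2) * L + m) (2 * (j : ℝ) * L - m) ρ z)
          + 2 * (1 - m / L) * Real.log n)
      atTop (𝓝 (u ρ z))) :
    ∀ ρ z : ℝ, 0 < ρ → u ρ (z + 2 * L) = u ρ z := by
  intro ρ z hρ
  have hL : 0 < L := hm.trans hmL
  set f : ℤ → ℝ := fun j =>
    intervalPotential ((2 * (j : ℝ) - 2) * L + m) (2 * (j : ℝ) * L - m) ρ z with hf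
  have hc : 0 < (2 * L - 2 * m) / ρ := div_pos (by linarith) hρ
  have hA := aux_arsinh _ hc
  have hT : ∀ d : ℝ, Tendsto (fun n : ℕ => ((n : ℝ) * (2 * L) + d) / ρ) atTop atTop := fun d =>
    (tendsto_atTop_add_const_right _ _
      (tendsto_natCast_atTop_atTop.atTop_mul_const (by positivity))).atTop_div_const hρ
  have hplus : Tendsto (fun n : ℕ => f (n : ℤ)) atTop (𝓝 0) := by
    refine (hA.comp (hT (-2 * L + m - z))).congr fun n => ?_
    simp only [hf, Function.comp]
    rw [aux_U _ _ _ _ hρ, ← neg_sub_neg, ← Real.arsinh_neg, ← Real.arsinh_neg]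
    rw [← neg_sub_neg, ← Real.arsinh_neg, ← Real.arsinh_neg]
    simp only [neg_neg]
    rw [← neg_sub_neg, ← Real.arsinh_neg, ← Real.arsinh_neg]
    congr 2 <;> · push_cast; field_simp; ring
  have hminus : Tendsto (fun n : ℕ => f (-(n : ℤ) - 1)) atTop (𝓝 0) := by
    refine (hA.comp (hT (z + 2 * L + m))).congr fun n => ?_
    simp only [hf, Function.comp]
    rw [aux_U _ _ _ _ hρ]
    congr 2 <;> · push_cast; field_simp; ring
  have h1 := (hu ρ z hρ).add (hminus.sub hplus)
  rw [sub_zero, add_zero] at h1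
  refine tendsto_nhds_unique (hu ρ (z + 2 * L) hρ) (h1.congr fun n => ?_)
  have h2 : ∀ j : ℤ, intervalPotential ((2 * (j : ℝ) - 2) * L + m) (2 * (j : ℝ) * L - m) ρ
      (z + 2 * L) = f (j - 1) := by
    intro j
    simp only [hf, aux_U _ _ _ _ hρ]
    congr 3 <;> · push_cast; ring
  simp only [h2]
  rw [aux_sum f n]
  ring
end

section
/- Let L>0 and for each integer j let Γ_{2j} = [2jL, (2j+1)L]. Then for every (ρ,z) with ρ>0, the renormalized sequence S_n(ρ,z) = Σ_{j=−n}^{n} U_{Γ_{2j}}(ρ,z) + log n (n ≥ 1) converges to a finite limit u(ρ,z) as n → ∞. -/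
open Filter Topology

lemma sol_root_pos (ρ x : ℝ) (hρ : 0 < ρ) :
    0 < Real.sqrt (ρ ^ 2 + x ^ 2) - x := by
  have h : |x| < Real.sqrt (ρ ^ 2 + x ^ 2) := by
    apply Real.lt_sqrt_of_sq_lt
    rw [sq_abs]
    nlinarith
  linarith [le_abs_self x]

lemma sol_hasDeriv (ρ z s : ℝ) (hρ : 0 < ρ) :
    HasDerivAt (fun s => Real.log (Real.sqrt (ρ ^ 2 + (z - s) ^ 2) - (z - s)))
      (1 / Real.sqrt (ρ ^ 2 + (z - s) ^ 2)) s := by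
  have hp : 0 < ρ ^ 2 + (z - s) ^ 2 := by positivity
  have hD : 0 < Real.sqrt (ρ ^ 2 + (z - s) ^ 2) := Real.sqrt_pos.2 hp
  have hx := sol_root_pos ρ (z - s) hρ
  have h1 : HasDerivAt (fun s : ℝ => z - s) (-1) s := by
    simpa using (hasDerivAt_id s).const_sub z
  have h2 := (((h1.pow 2).const_add (ρ ^ 2)).sqrt hp.ne').sub h1
  have h3 := h2.log hx.ne'
  refine h3.congr_deriv ?_
  have hx' := hx.ne'
  simp only [Pi.sub_apply, Pi.pow_apply]
  field_simp
  push_cast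
  ring

lemma sol_mvt (ρ z a b : ℝ) (hρ : 0 < ρ) (hab : a < b) :
    ∃ s ∈ Set.Ioo a b,
      intervalPotential a b ρ z = -((b - a) / Real.sqrt (ρ ^ 2 + (z - s) ^ 2)) := by
  obtain ⟨s, hs, h⟩ := exists_hasDerivAt_eq_slope _ _ hab
    (fun x _ => (sol_hasDeriv ρ z x hρ).continuousAt.continuousWithinAt)
    (fun x _ => sol_hasDeriv ρ z x hρ)
  refine ⟨s, hs, ?_⟩
  have hba : b - a ≠ 0 := by linarith
  rw [eq_div_iff hba] at h
  unfold intervalPotential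
  rw [div_eq_mul_one_div, mul_comm, h]
  ring

lemma sol_bound (L : ℝ) (hL : 0 < L) (ρ z : ℝ) (hρ : 0 < ρ) (j : ℤ) (hj0 : j ≠ 0)
    (hj : (ρ + |z| + L) / L ≤ |(j : ℝ)|) :
    |intervalPotential (2 * (j : ℝ) * L) ((2 * (j : ℝ) + 1) * L) ρ z + 1 / (2 * |(j : ℝ)|)|
      ≤ (ρ + |z| + L) / (2 * L) * (1 / (j : ℝ) ^ 2) := by
  obtain ⟨s, ⟨hs1, hs2⟩, h⟩ := sol_mvt ρ z (2 * (j : ℝ) * L) ((2 * (j : ℝ) + 1) * L) hρ (by linarith)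
  rw [h]
  have hjp : 0 < |(j : ℝ)| := abs_pos.2 (by exact_mod_cast hj0)
  rw [← sq_abs (j : ℝ)]
  have hs3 : |(|s| - 2 * |(j : ℝ)| * L)| ≤ L := by
    have := abs_abs_sub_abs_le s (2 * (j : ℝ) * L)
    rw [abs_mul, abs_mul, abs_of_pos hL, abs_two] at this
    refine this.trans ?_
    rw [abs_le]; constructor <;> linarith
  have hz1 : |z - s| ≤ |z| + |s| := abs_sub z s
  have hz2 : |s| - |z| ≤ |z - s| := by
    rw [abs_sub_comm]; exact abs_sub_abs_le_abs_sub s z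
  have hD1 : |z - s| ≤ Real.sqrt (ρ ^ 2 + (z - s) ^ 2) := by
    apply Real.le_sqrt_of_sq_le
    rw [sq_abs]
    nlinarith
  have hD2 : Real.sqrt (ρ ^ 2 + (z - s) ^ 2) ≤ ρ + |z - s| := by
    rw [Real.sqrt_le_left (by positivity)]
    rw [← sq_abs (z - s)]
    nlinarith [abs_nonneg (z - s)]
  generalize Real.sqrt (ρ ^ 2 + (z - s) ^ 2) = D at *
  generalize |(j : ℝ)| = k at *
  rw [div_le_iff₀ hL] at hj
  rw [abs_le] at hs3
  have hC : |D - 2 * k * L| ≤ ρ + |z| + L := by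
    rw [abs_le]; constructor <;> linarith
  have hDk : k * L ≤ D := by linarith [(abs_le.1 hC).1]
  have hkL : 0 < k * L := by positivity
  have hDp : 0 < D := by linarith
  have e : -(((2 * (j : ℝ) + 1) * L - 2 * (j : ℝ) * L) / D) + 1 / (2 * k)
      = (D - 2 * k * L) / (2 * k * D) := by
    field_simp
    ring
  rw [e, abs_div, abs_of_pos (show 0 < 2 * k * D by positivity)]
  have e2 : (ρ + |z| + L) / (2 * L) * (1 / k ^ 2) = (ρ + |z| + L) / (2 * k * (k * L)) := by
    field_simp
  rw [e2]
  gcongr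

lemma sol_harmonic (n : ℕ) :
    ∑ j ∈ Finset.Icc (-(n : ℤ)) (n : ℤ), 1 / (2 * |(j : ℝ)|) = (harmonic n : ℝ) := by
  induction n with
  | zero => simp
  | succ n ih =>
    rw [Nat.cast_add, Nat.cast_one, Finset.Icc_succ_succ, Finset.sum_union (by simp),
      Finset.sum_pair (by lia), ih, harmonic_succ]
    push_cast
    rw [abs_neg, abs_of_pos (show (0 : ℝ) < n + 1 by positivity)]
    field_simp
    ring

lemma sol_summable (L : ℝ) (hL : 0 < L) (ρ z : ℝ) (hρ : 0 < ρ) :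
    Summable (fun j : ℤ => intervalPotential (2 * (j : ℝ) * L) ((2 * (j : ℝ) + 1) * L) ρ z
      + 1 / (2 * |(j : ℝ)|)) := by
  refine summable_of_isBigO (Real.summable_one_div_int_pow.2 one_lt_two) ?_
  refine Asymptotics.IsBigO.of_bound ((ρ + |z| + L) / (2 * L)) ?_
  have h1 : ∀ᶠ j : ℤ in cofinite, (ρ + |z| + L) / L ≤ |(j : ℝ)| :=
    (tendsto_norm_comp_cofinite_atTop_of_isClosedEmbedding
      Int.isClosedEmbedding_coe_real).eventually_ge_atTop _
  have h2 : ∀ᶠ j : ℤ in cofinite, j ≠ 0 := (Set.finite_singleton (0 : ℤ)).compl_mem_cofinite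
  filter_upwards [h1, h2] with j hj hj0
  rw [Real.norm_eq_abs, Real.norm_of_nonneg (by positivity)]
  exact sol_bound L hL ρ z hρ j hj0 hj

/-- Convergence of the renormalized sum of rod potentials for the soliton (string of
corners): the rods are `Γ_{2j} = [2jL, (2j+1)L]` and the renormalization term is `log n`. -/
theorem soliton_renormalized_sum_converges (L : ℝ) (hL : 0 < L) (ρ z : ℝ) (hρ : 0 < ρ) :
    ∃ u : ℝ, Tendsto
      (fun n : ℕ =>
        (∑ j ∈ Finset.Icc (-(n : ℤ)) (n : ℤ),
          intervalPotential (2 * (j : ℝ) * L) ((2 * (j : ℝ) + 1) * L) ρ z)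
          + Real.log n)
      atTop (𝓝 u) := by
  have h := (sol_summable L hL ρ z hρ).hasSum
  have h1 := (SummationFilter.hasSum_symmetricIcc_iff).1
    (h.mono_left (SummationFilter.symmetricIcc ℤ).le_atTop)
  refine ⟨_, (h1.sub Real.tendsto_harmonic_sub_log).congr fun n => ?_⟩
  rw [Finset.sum_add_distrib, sol_harmonic]
  ring
end

section
/- Let L>0, Γ_{2j} = [2jL,(2j+1)L] for j∈ℤ, and let u(ρ,z) = lim_{n→∞} ( Σ_{j=−n}^{n} U_{Γ_{2j}}(ρ,z) + log n ) be the renormalized soliton potential. Then u is periodic in z with period 2L: u(ρ, z+2L) = u(ρ,z) for all ρ>0 and z∈ℝ. -/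
open Filter Topology

lemma log_aux (ρ t : ℝ) (hρ : 0 < ρ) :
    Real.log (Real.sqrt (ρ ^ 2 + t ^ 2) - t) = Real.log ρ - Real.arsinh (t / ρ) := by
  have h : Real.sqrt (ρ ^ 2 + t ^ 2) - t = ρ * Real.exp (Real.arsinh (-(t / ρ))) := by
    rw [Real.exp_arsinh]
    have h1 : ρ ^ 2 + t ^ 2 = ρ ^ 2 * (1 + (-(t / ρ)) ^ 2) := by field_simp
    rw [h1, Real.sqrt_mul (by positivity), Real.sqrt_sq hρ.le]
    field_simp
    ring
  rw [h, Real.log_mul hρ.ne' (Real.exp_ne_zero _), Real.log_exp, Real.arsinh_neg]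
  ring

lemma arsinh_diff (c : ℝ) (hc : 0 < c) :
    Tendsto (fun x : ℝ => Real.arsinh (x - c) - Real.arsinh x) atTop (𝓝 0) := by
  have hb : Tendsto (fun x : ℝ => -(c * (x - c)⁻¹)) atTop (𝓝 0) := by
    have h1 : Tendsto (fun x : ℝ => x - c) atTop atTop := tendsto_atTop_add_const_right _ (-c) tendsto_id
    simpa using ((tendsto_inv_atTop_zero.comp h1).const_mul c).neg
  refine tendsto_of_tendsto_of_tendsto_of_le_of_le' hb tendsto_const_nhds ?_ ?_
  · filter_upwards [eventually_gt_atTop c] with x hx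
    obtain ⟨ξ, hξ, h⟩ := exists_hasDerivAt_eq_slope Real.arsinh (fun y => (Real.sqrt (1 + y ^ 2))⁻¹)
      (show x - c < x by linarith) Real.continuous_arsinh.continuousOn
      (fun y _ => Real.hasDerivAt_arsinh y)
    have hp : 0 < x - c := by linarith
    have h2 : (Real.sqrt (1 + ξ ^ 2))⁻¹ ≤ (x - c)⁻¹ := by
      apply inv_anti₀ hp
      apply Real.le_sqrt_of_sq_le
      nlinarith [hξ.1]
    have h3 : x - (x - c) = c := by ring
    rw [h3, eq_div_iff hc.ne'] at h
    nlinarith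
  · filter_upwards with x
    have := Real.arsinh_le_arsinh.2 (show x - c ≤ x by linarith)
    linarith

lemma sum_aux (F : ℤ → ℝ) (n : ℕ) :
    ∑ j ∈ Finset.Icc (-(n : ℤ)) (n : ℤ), F (j - 1) =
      ∑ j ∈ Finset.Icc (-(n : ℤ)) (n : ℤ), F j + (F (-(n : ℤ) - 1) - F n) := by
  induction n with
  | zero => simp
  | succ n ih =>
    have h : Finset.Icc (-((n + 1 : ℕ) : ℤ)) ((n + 1 : ℕ) : ℤ) =
        insert (-(n : ℤ) - 1) (insert ((n : ℤ) + 1) (Finset.Icc (-(n : ℤ)) (n : ℤ))) := by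
      ext x
      simp only [Finset.mem_Icc, Finset.mem_insert]
      push_cast
      omega
    have e : -((n + 1 : ℕ) : ℤ) = -(n : ℤ) - 1 := by push_cast; ring
    rw [h, e]
    rw [Finset.sum_insert (by simp; omega), Finset.sum_insert (by simp),
      Finset.sum_insert (by simp; omega), Finset.sum_insert (by simp), ih]
    push_cast
    simp only [add_sub_cancel_right]
    ring

/-- The renormalized soliton potential `u` is `2L`-periodic in `z`. -/
theorem soliton_potential_periodic (L : ℝ) (hL : 0 < L)
    (u : ℝ → ℝ → ℝ)
    (hu : ∀ ρ z : ℝ, 0 < ρ → Tendsto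
      (fun n : ℕ =>
        (∑ j ∈ Finset.Icc (-(n : ℤ)) (n : ℤ),
          intervalPotential (2 * (j : ℝ) * L) ((2 * (j : ℝ) + 1) * L) ρ z)
          + Real.log n)
      atTop (𝓝 (u ρ z))) :
    ∀ ρ z : ℝ, 0 < ρ → u ρ (z + 2 * L) = u ρ z := by
  intro ρ z hρ
  have hc : 0 < L / ρ := by positivity
  set F : ℤ → ℝ := fun j =>
    intervalPotential (2 * (j : ℝ) * L) ((2 * (j : ℝ) + 1) * L) ρ z with hF
  have hn : Tendsto (fun n : ℕ => 2 * L / ρ * (n : ℝ)) atTop atTop :=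
    tendsto_natCast_atTop_atTop.const_mul_atTop (by positivity)
  have hA : Tendsto (fun n : ℕ => F (-(n : ℤ) - 1)) atTop (𝓝 0) := by
    have h1 := (arsinh_diff _ hc).comp (tendsto_atTop_add_const_right _ ((z + 2 * L) / ρ) hn)
    refine h1.congr fun n => ?_
    simp only [hF, intervalPotential, log_aux _ _ hρ, Function.comp]
    have e1 : 2 * L / ρ * (n : ℝ) + (z + 2 * L) / ρ - L / ρ =
      (z - (2 * ((-(n : ℤ) - 1 : ℤ) : ℝ) + 1) * L) / ρ := by push_cast; ring
    have e2 : 2 * L / ρ * (n : ℝ) + (z + 2 * L) / ρ =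
      (z - 2 * ((-(n : ℤ) - 1 : ℤ) : ℝ) * L) / ρ := by push_cast; ring
    rw [e1, e2]; ring
  have hB : Tendsto (fun n : ℕ => F n) atTop (𝓝 0) := by
    have h1 := (arsinh_diff _ hc).comp (tendsto_atTop_add_const_right _ ((L - z) / ρ) hn)
    refine h1.congr fun n => ?_
    simp only [hF, intervalPotential, log_aux _ _ hρ, Function.comp]
    have e1 : 2 * L / ρ * (n : ℝ) + (L - z) / ρ - L / ρ =
      -((z - 2 * ((n : ℤ) : ℝ) * L) / ρ) := by push_cast; ring
    have e2 : 2 * L / ρ * (n : ℝ) + (L - z) / ρ =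
      -((z - (2 * ((n : ℤ) : ℝ) + 1) * L) / ρ) := by push_cast; ring
    rw [e1, e2, Real.arsinh_neg, Real.arsinh_neg]; ring
  have h := (hu ρ z hρ).add (hA.sub hB)
  rw [sub_zero, add_zero] at h
  refine tendsto_nhds_unique (hu ρ (z + 2 * L) hρ) (h.congr fun n => ?_)
  have hs := sum_aux F n
  have hshift : ∀ j : ℤ, intervalPotential (2 * (j : ℝ) * L) ((2 * (j : ℝ) + 1) * L) ρ (z + 2 * L)
      = F (j - 1) := by
    intro j
    simp only [hF, intervalPotential]
    have e1 : z + 2 * L - 2 * (j : ℝ) * L = z - 2 * ((j - 1 : ℤ) : ℝ) * L := by push_cast; ring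
    have e2 : z + 2 * L - (2 * (j : ℝ) + 1) * L = z - (2 * ((j - 1 : ℤ) : ℝ) + 1) * L := by
      push_cast; ring
    rw [e1, e2]
  simp only [hshift]
  rw [hs]
  ring
end

section
/- Let L>0 and for each integer j let Γ_{2j} = [2jL,(2j+1)L]. Then the renormalized sequence S_n(ρ,z) = Σ_{j=−n}^{n} U_{Γ_{2j}}(ρ,z) + log n converges locally uniformly on the open half-plane H = {(ρ,z) : ρ>0}, and the limit function u satisfies the axisymmetric Laplace equation ∂²_ρ u + ρ^{-1} ∂_ρ u + ∂²_z u = 0 on H. -/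
open Filter Topology

noncomputable def rr (ρ x : ℝ) : ℝ := Real.sqrt (ρ ^ 2 + x ^ 2)

noncomputable def ff (ρ x : ℝ) : ℝ := Real.log (rr ρ x - x)

lemma rr_pos {ρ : ℝ} (h : 0 < ρ) (x : ℝ) : 0 < rr ρ x := by
  unfold rr; positivity

lemma rr_sq (ρ x : ℝ) : rr ρ x ^ 2 = ρ ^ 2 + x ^ 2 := by
  unfold rr; rw [Real.sq_sqrt]; positivity

lemma le_rr {ρ : ℝ} (h : 0 < ρ) (x : ℝ) : ρ ≤ rr ρ x := by
  have := rr_sq ρ x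
  have := rr_pos h x
  nlinarith [sq_nonneg x]

lemma abs_le_rr {ρ : ℝ} (h : 0 < ρ) (x : ℝ) : |x| ≤ rr ρ x := by
  have := rr_sq ρ x
  have := rr_pos h x
  refine abs_le_of_sq_le_sq ?_ this.le
  nlinarith [sq_nonneg ρ]

lemma rr_le {ρ : ℝ} (h : 0 < ρ) (x : ℝ) : rr ρ x ≤ ρ + |x| := by
  have := rr_sq ρ x
  have := rr_pos h x
  have := abs_nonneg x
  have h3 := sq_abs x
  by_contra! hc
  nlinarith [mul_nonneg h.le this]

lemma rr_sub_pos {ρ : ℝ} (h : 0 < ρ) (x : ℝ) : 0 < rr ρ x - x := by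
  have := rr_sq ρ x
  have := rr_pos h x
  by_contra! hc
  nlinarith [sq_pos_of_pos h]

lemma rr_dx {ρ : ℝ} (h : 0 < ρ) (x : ℝ) : HasDerivAt (fun y => rr ρ y) (x / rr ρ x) x := by
  have h1 : HasDerivAt (fun y : ℝ => ρ ^ 2 + y ^ 2) (2 * x) x := by
    simpa using (hasDerivAt_pow 2 x).const_add (ρ ^ 2)
  have := h1.sqrt (by positivity)
  refine this.congr_deriv ?_
  unfold rr
  rw [mul_div_mul_left _ _ two_ne_zero]

lemma rr_dρ {ρ : ℝ} (h : 0 < ρ) (x : ℝ) : HasDerivAt (fun y => rr y x) (ρ / rr ρ x) ρ := by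
  have h1 : HasDerivAt (fun y : ℝ => y ^ 2 + x ^ 2) (2 * ρ) ρ := by
    simpa using (hasDerivAt_pow 2 ρ).add_const (x ^ 2)
  have := h1.sqrt (by positivity)
  refine this.congr_deriv ?_
  unfold rr
  rw [mul_div_mul_left _ _ two_ne_zero]

lemma ff_dx {ρ : ℝ} (h : 0 < ρ) (x : ℝ) : HasDerivAt (fun y => ff ρ y) (-(1 / rr ρ x)) x := by
  have h2 := rr_sub_pos h x
  have h3 := rr_pos h x
  have := ((rr_dx h x).sub (hasDerivAt_id x)).log h2.ne'
  refine this.congr_deriv ?_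
  simp only [Pi.sub_apply, id]
  field_simp
  ring

lemma ff_dρ {ρ : ℝ} (h : 0 < ρ) (x : ℝ) :
    HasDerivAt (fun y => ff y x) ((1 + x / rr ρ x) / ρ) ρ := by
  have h2 := rr_sub_pos h x
  have h3 := rr_pos h x
  have := ((rr_dρ h x).sub_const x).log h2.ne'
  refine this.congr_deriv ?_
  have := rr_sq ρ x
  field_simp
  linear_combination -this

lemma q_dx {ρ : ℝ} (h : 0 < ρ) (x : ℝ) :
    HasDerivAt (fun y => y / rr ρ y) (ρ ^ 2 / rr ρ x ^ 3) x := by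
  have h3 := rr_pos h x
  refine ((hasDerivAt_id x).div (rr_dx h x) h3.ne').congr_deriv ?_
  have := rr_sq ρ x
  simp only [id]
  field_simp
  linear_combination this

lemma q_dρ {ρ : ℝ} (h : 0 < ρ) (x : ℝ) :
    HasDerivAt (fun y => x / rr y x) (-(x * ρ / rr ρ x ^ 3)) ρ := by
  have h3 := rr_pos h x
  refine ((hasDerivAt_const ρ x).div (rr_dρ h x) h3.ne').congr_deriv ?_
  field_simp
  ring

lemma i_dx {ρ : ℝ} (h : 0 < ρ) (x : ℝ) :
    HasDerivAt (fun y => 1 / rr ρ y) (-(x / rr ρ x ^ 3)) x := by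
  have h3 := rr_pos h x
  refine ((hasDerivAt_const x (1:ℝ)).div (rr_dx h x) h3.ne').congr_deriv ?_
  field_simp
  ring

noncomputable def VV (a b ρ z : ℝ) : ℝ := ff ρ (z - a) - ff ρ (z - b)
noncomputable def AA (a b ρ z : ℝ) : ℝ :=
  ((z - a) / rr ρ (z - a) - (z - b) / rr ρ (z - b)) / ρ
noncomputable def DD (a b ρ z : ℝ) : ℝ := 1 / rr ρ (z - b) - 1 / rr ρ (z - a)
noncomputable def EE (a b ρ z : ℝ) : ℝ :=
  (z - a) / rr ρ (z - a) ^ 3 - (z - b) / rr ρ (z - b) ^ 3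
noncomputable def BB (a b ρ z : ℝ) : ℝ := -(AA a b ρ z / ρ) - EE a b ρ z

lemma VV_dρ (a b : ℝ) {ρ : ℝ} (h : 0 < ρ) (z : ℝ) :
    HasDerivAt (fun y => VV a b y z) (AA a b ρ z) ρ := by
  refine ((ff_dρ h (z - a)).sub (ff_dρ h (z - b))).congr_deriv ?_
  unfold AA; ring

lemma VV_dz (a b : ℝ) {ρ : ℝ} (h : 0 < ρ) (z : ℝ) :
    HasDerivAt (fun y => VV a b ρ y) (DD a b ρ z) z := by
  refine (((ff_dx h (z - a)).comp_sub_const z a).sub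
    ((ff_dx h (z - b)).comp_sub_const z b)).congr_deriv ?_
  unfold DD; ring

lemma DD_dz (a b : ℝ) {ρ : ℝ} (h : 0 < ρ) (z : ℝ) :
    HasDerivAt (fun y => DD a b ρ y) (EE a b ρ z) z := by
  refine (((i_dx h (z - b)).comp_sub_const z b).sub
    ((i_dx h (z - a)).comp_sub_const z a)).congr_deriv ?_
  unfold EE; ring

lemma AA_dρ (a b : ℝ) {ρ : ℝ} (h : 0 < ρ) (z : ℝ) :
    HasDerivAt (fun y => AA a b y z) (BB a b ρ z) ρ := by
  refine (((q_dρ h (z - a)).sub (q_dρ h (z - b))).div (hasDerivAt_id ρ) h.ne').congr_deriv ?_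
  unfold BB AA EE
  have h1 := rr_pos h (z - a)
  have h2 := rr_pos h (z - b)
  simp only [id, Pi.sub_apply]
  field_simp
  ring

/-- MVT in the source variable. -/
lemma mvt_src (F F' : ℝ → ℝ) (hF : ∀ x, HasDerivAt F (F' x) x) (z a b : ℝ) (hab : a < b) :
    ∃ s ∈ Set.Ioo a b, F (z - a) - F (z - b) = (b - a) * F' (z - s) := by
  have hd : ∀ s, HasDerivAt (fun s => F (z - s)) (-F' (z - s)) s := fun s =>
    (hF (z - s)).comp_const_sub z s
  obtain ⟨s, hs, h⟩ := exists_hasDerivAt_eq_slope (fun s => F (z - s)) (fun s => -F' (z - s)) hab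
    (fun x _ => (hd x).continuousAt.continuousWithinAt) (fun x _ => hd x)
  refine ⟨s, hs, ?_⟩
  have : b - a ≠ 0 := by linarith
  rw [eq_div_iff this] at h
  linarith

lemma rr_lower {L δ R : ℝ} (hL : 0 < L) (hδ : 0 < δ) (hR : 0 < R) (j : ℤ) {s ρ z : ℝ}
    (hs : s ∈ Set.Icc (2 * (j : ℝ) * L) ((2 * (j : ℝ) + 1) * L)) (hρ : δ < ρ) (hz : |z| < R) :
    δ / (δ + R + L) * L * (1 + |(j : ℝ)|) ≤ rr ρ (z - s) := by
  have h1 := le_rr (hδ.trans hρ) (z - s)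
  have h2 := abs_le_rr (hδ.trans hρ) (z - s)
  have h3 : |(j : ℝ)| * L ≤ |s| := by
    rcases le_or_gt 0 j with hj | hj
    · have hj' : (0 : ℝ) ≤ j := by exact_mod_cast hj
      rw [abs_of_nonneg hj']
      refine le_trans ?_ (le_abs_self s)
      nlinarith [hs.1, mul_nonneg hj' hL.le]
    · have hj' : (j : ℝ) ≤ -1 := by exact_mod_cast (by omega : j ≤ -1)
      rw [abs_of_neg (by linarith)]
      refine le_trans ?_ (neg_le_abs s)
      nlinarith [hs.2]
  have h4 : |s| - |z| ≤ |z - s| := by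
    rw [abs_sub_comm]; exact abs_sub_abs_le_abs_sub s z
  have h5 : |(j : ℝ)| * L - R ≤ rr ρ (z - s) := by linarith
  rw [div_mul_eq_mul_div, div_mul_eq_mul_div, div_le_iff₀ (by positivity)]
  nlinarith [mul_le_mul_of_nonneg_left h5 hδ.le, mul_le_mul_of_nonneg_left (hρ.le.trans h1) (add_pos hR hL).le]

noncomputable def cc (j : ℤ) : ℝ := 1 / (2 * |(j : ℝ)|)

noncomputable def la (L : ℝ) (j : ℤ) : ℝ := 2 * (j : ℝ) * L
noncomputable def lb (L : ℝ) (j : ℤ) : ℝ := (2 * (j : ℝ) + 1) * L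

lemma la_lt_lb {L : ℝ} (hL : 0 < L) (j : ℤ) : la L j < lb L j := by
  unfold la lb; linarith

lemma lb_sub_la (L : ℝ) (j : ℤ) : lb L j - la L j = L := by
  unfold la lb; ring

lemma bounds {L δ R : ℝ} (hL : 0 < L) (hδ : 0 < δ) (hR : 0 < R) :
    ∃ C : ℝ, ∀ (j : ℤ) (ρ z : ℝ), δ < ρ → ρ < R → |z| < R →
      |VV (la L j) (lb L j) ρ z + cc j| ≤ C / (1 + |(j : ℝ)|) ^ 2 ∧
      |AA (la L j) (lb L j) ρ z| ≤ C / (1 + |(j : ℝ)|) ^ 2 ∧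
      |BB (la L j) (lb L j) ρ z| ≤ C / (1 + |(j : ℝ)|) ^ 2 ∧
      |DD (la L j) (lb L j) ρ z| ≤ C / (1 + |(j : ℝ)|) ^ 2 ∧
      |EE (la L j) (lb L j) ρ z| ≤ C / (1 + |(j : ℝ)|) ^ 2 := by
  set κ := δ / (δ + R + L) * L with hκ
  have hκ0 : 0 < κ := by positivity
  set CV := L / κ + (2 * R + L) / κ with hCV
  set CD := L / κ ^ 2 with hCD
  set CE := 2 / κ ^ 2 with hCE
  set CA := L / κ ^ 2 / δ with hCA
  have hCV0 : 0 < CV := by positivity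
  have hCD0 : 0 < CD := by positivity
  have hCE0 : 0 < CE := by positivity
  have hCA0 : 0 < CA := by positivity
  refine ⟨CV + CD + CE + CA + CA / δ, fun j ρ z h1 h2 h3 => ?_⟩
  have hρ : 0 < ρ := hδ.trans h1
  have hab := la_lt_lb hL j
  have hlow : ∀ s ∈ Set.Icc (la L j) (lb L j), κ * (1 + |(j : ℝ)|) ≤ rr ρ (z - s) :=
    fun s hs => rr_lower hL hδ hR j hs h1 h3
  have hj0 := abs_nonneg (j : ℝ)
  set J := 1 + |(j : ℝ)| with hJ
  have hJ1 : 1 ≤ J := by linarith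
  have hJ0 : 0 < J := by linarith
  -- inverse square bound
  have hinv2 : ∀ s ∈ Set.Icc (la L j) (lb L j), 1 / rr ρ (z - s) ^ 2 ≤ 1 / κ ^ 2 / J ^ 2 := by
    intro s hs
    rw [div_div, ← mul_pow]
    have := hlow s hs
    gcongr
  have hcube : ∀ x, |x / rr ρ x ^ 3| ≤ 1 / rr ρ x ^ 2 := by
    intro x
    have hp := rr_pos hρ x
    have := abs_le_rr hρ x
    rw [abs_div, abs_of_pos (pow_pos hp 3), div_le_div_iff₀ (by positivity) (by positivity)]
    nlinarith [mul_le_mul_of_nonneg_right this (sq_nonneg (rr ρ x))]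
  have hcube' : ∀ x, |ρ ^ 2 / rr ρ x ^ 3| ≤ ρ * (1 / rr ρ x ^ 2) := by
    intro x
    have hp := rr_pos hρ x
    have := le_rr hρ x
    rw [abs_of_pos (by positivity), ← mul_div_assoc, div_le_div_iff₀ (by positivity) (by positivity)]
    have h6 : 0 ≤ ρ * rr ρ x ^ 2 := by positivity
    nlinarith [mul_le_mul_of_nonneg_left this h6]
  have hE : |EE (la L j) (lb L j) ρ z| ≤ CE / J ^ 2 := by
    unfold EE
    refine (abs_sub _ _).trans ?_
    have e1 := (hcube (z - la L j)).trans (hinv2 _ ⟨le_rfl, hab.le⟩)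
    have e2 := (hcube (z - lb L j)).trans (hinv2 _ ⟨hab.le, le_rfl⟩)
    refine (add_le_add e1 e2).trans (le_of_eq ?_)
    rw [hCE]; ring
  have hD : |DD (la L j) (lb L j) ρ z| ≤ CD / J ^ 2 := by
    obtain ⟨s, hs, e⟩ := mvt_src _ _ (fun x => i_dx hρ x) z _ _ hab
    have : DD (la L j) (lb L j) ρ z = L * ((z - s) / rr ρ (z - s) ^ 3) := by
      unfold DD; rw [lb_sub_la] at e; linarith
    rw [this, abs_mul, abs_of_pos hL]
    refine (mul_le_mul_of_nonneg_left ((hcube _).trans (hinv2 s ⟨hs.1.le, hs.2.le⟩)) hL.le).trans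
      (le_of_eq ?_)
    rw [hCD]; ring
  have hA : |AA (la L j) (lb L j) ρ z| ≤ CD / J ^ 2 := by
    obtain ⟨s, hs, e⟩ := mvt_src _ _ (fun x => q_dx hρ x) z _ _ hab
    unfold AA
    rw [e, lb_sub_la, abs_div, abs_mul, abs_of_pos hL, abs_of_pos hρ, div_le_iff₀ hρ]
    refine (mul_le_mul_of_nonneg_left ((hcube' _).trans
      (mul_le_mul_of_nonneg_left (hinv2 s ⟨hs.1.le, hs.2.le⟩) hρ.le)) hL.le).trans (le_of_eq ?_)
    rw [hCD]; ring
  have hB : |BB (la L j) (lb L j) ρ z| ≤ (CA + CE) / J ^ 2 := by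
    unfold BB
    refine (abs_sub _ _).trans ?_
    rw [abs_neg, abs_div, abs_of_pos hρ, add_div]
    refine add_le_add ?_ hE
    have : CA / J ^ 2 = (CD / J ^ 2) / δ := by rw [hCA, hCD]; ring
    rw [this]
    gcongr
  have hV : |VV (la L j) (lb L j) ρ z + cc j| ≤ CV / J ^ 2 := by
    obtain ⟨s, hs, e⟩ := mvt_src _ _ (fun x => ff_dx hρ x) z _ _ hab
    rw [lb_sub_la] at e
    have hlo := hlow s ⟨hs.1.le, hs.2.le⟩
    have hp := rr_pos hρ (z - s)
    unfold VV
    rw [e]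
    rcases eq_or_ne j 0 with rfl | hj
    · have : J = 1 := by simp [hJ]
      rw [this] at hlo ⊢
      simp only [cc, Int.cast_zero, abs_zero, mul_zero, div_zero, add_zero]
      rw [abs_mul, abs_neg, abs_of_pos hL, abs_of_pos (by positivity), mul_one_div, one_pow, div_one]
      have : L / rr ρ (z - s) ≤ L / κ := by gcongr; linarith
      have : 0 < (2 * R + L) / κ := by positivity
      linarith
    · have hj1 : 1 ≤ |(j : ℝ)| := by exact_mod_cast Int.one_le_abs hj
      have hja : 0 < |(j : ℝ)| := by linarith
      have ha : |la L j| = 2 * |(j : ℝ)| * L := by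
        unfold la; rw [abs_mul, abs_mul, abs_of_pos hL]; norm_num
      have hsa : |s - la L j| ≤ L := by
        have := lb_sub_la L j
        rw [abs_of_pos (by linarith [hs.1])]; linarith [hs.2]
      have hzs : |(|z - s| - |la L j|)| ≤ R + L := by
        have q1 : |z - s| = |s - z| := abs_sub_comm _ _
        have q2 := abs_abs_sub_abs_le_abs_sub (s - z) (la L j)
        have q3 : |s - z - la L j| ≤ |s - la L j| + |z| := by
          have : s - z - la L j = (s - la L j) - z := by ring
          rw [this]; exact abs_sub _ _
        rw [q1]; linarith
      have hr : |(rr ρ (z - s) - |la L j|)| ≤ 2 * R + L := by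
        have := abs_le_rr hρ (z - s)
        have := rr_le hρ (z - s)
        rw [abs_le] at hzs ⊢
        constructor <;> linarith [hzs.1, hzs.2]
      have : L * -(1 / rr ρ (z - s)) + cc j
          = (rr ρ (z - s) - |la L j|) / (rr ρ (z - s) * (2 * |(j : ℝ)|)) := by
        rw [ha]; unfold cc; field_simp; ring
      rw [this, abs_div, abs_of_pos (by positivity : 0 < rr ρ (z - s) * (2 * |(j : ℝ)|))]
      have hden : κ * J ^ 2 ≤ rr ρ (z - s) * (2 * |(j : ℝ)|) := by
        have : J ≤ 2 * |(j : ℝ)| := by linarith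
        calc κ * J ^ 2 = (κ * J) * J := by ring
          _ ≤ _ := by gcongr
      calc _ ≤ (2 * R + L) / (κ * J ^ 2) := by gcongr
        _ = (2 * R + L) / κ / J ^ 2 := by rw [div_div]
        _ ≤ _ := by
          gcongr
          have : 0 < L / κ := by positivity
          linarith
  have hAd : 0 < CA / δ := by positivity
  refine ⟨hV.trans ?_, hA.trans ?_, hB.trans ?_, hD.trans ?_, hE.trans ?_⟩ <;>
    exact div_le_div_of_nonneg_right (by linarith) (by positivity)

lemma summ (C : ℝ) : Summable (fun j : ℤ => C / (1 + |(j : ℝ)|) ^ 2) := by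
  have h : Summable (fun n : ℕ => C / (1 + (n : ℝ)) ^ 2) := by
    have := ((summable_nat_add_iff 1).2 (Real.summable_one_div_nat_pow.2 one_lt_two)).mul_left C
    refine this.congr fun n => ?_
    push_cast
    rw [mul_one_div, add_comm]
  refine Summable.of_nat_of_neg ?_ ?_ <;> simpa using h

lemma sum_cc (n : ℕ) : ∑ j ∈ Finset.Icc (-(n : ℤ)) (n : ℤ), cc j = (harmonic n : ℝ) := by
  induction n with
  | zero => simp [cc]
  | succ n ih =>
    have := Finset.sum_Icc_succ_eq_add_endpoints cc (N := n)
    push_cast at this ⊢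
    rw [this, ih, harmonic_succ]
    unfold cc
    push_cast
    have h : (0 : ℝ) < (n : ℝ) + 1 := by positivity
    have h2 : |-((n : ℝ) + 1)| = (n : ℝ) + 1 := by rw [abs_neg, abs_of_pos h]
    have h3 : |-1 + -(n : ℝ)| = (n : ℝ) + 1 := by rw [← h2]; ring_nf
    simp only [h2, abs_of_pos h]
    field_simp
    ring

noncomputable def uu (L : ℝ) (p : ℝ × ℝ) : ℝ :=
  (∑' j : ℤ, (VV (la L j) (lb L j) p.1 p.2 + cc j)) - Real.eulerMascheroniConstant

lemma uu_tendsto {L : ℝ} (hL : 0 < L) :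
    TendstoLocallyUniformlyOn
        (fun (n : ℕ) (p : ℝ × ℝ) =>
          (∑ j ∈ Finset.Icc (-(n : ℤ)) (n : ℤ),
            intervalPotential (2 * (j : ℝ) * L) ((2 * (j : ℝ) + 1) * L) p.1 p.2)
            + Real.log n)
        (uu L) atTop {p : ℝ × ℝ | 0 < p.1} := by
  have key : ∀ p : ℝ × ℝ, 0 < p.1 → ∃ t ∈ 𝓝 p, TendstoUniformlyOn
        (fun (n : ℕ) (p : ℝ × ℝ) =>
          (∑ j ∈ Finset.Icc (-(n : ℤ)) (n : ℤ),
            intervalPotential (2 * (j : ℝ) * L) ((2 * (j : ℝ) + 1) * L) p.1 p.2)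
            + Real.log n)
        (uu L) atTop t := by
    intro p hp
    have hR : 0 < p.1 + |p.2| + 1 := by positivity
    obtain ⟨C, hC⟩ := bounds hL (half_pos hp) hR
    refine ⟨{q | p.1 / 2 < q.1 ∧ q.1 < p.1 + |p.2| + 1 ∧ |q.2| < p.1 + |p.2| + 1}, ?_, ?_⟩
    · refine IsOpen.mem_nhds ?_ ⟨by linarith, by linarith [abs_nonneg p.2], by linarith⟩
      exact (isOpen_lt continuous_const continuous_fst).inter
        ((isOpen_lt continuous_fst continuous_const).inter
          (isOpen_lt continuous_snd.abs continuous_const))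
    · have h1 := tendstoUniformlyOn_tsum (f := fun (j : ℤ) (q : ℝ × ℝ) =>
        VV (la L j) (lb L j) q.1 q.2 + cc j) (summ C) (s := {q : ℝ × ℝ | p.1 / 2 < q.1 ∧
          q.1 < p.1 + |p.2| + 1 ∧ |q.2| < p.1 + |p.2| + 1})
        (fun j q hq => (hC j q.1 q.2 hq.1 hq.2.1 hq.2.2).1)
      have h2 := Real.tendsto_harmonic_sub_log
      rw [Metric.tendstoUniformlyOn_iff] at h1 ⊢
      intro ε hε
      have h3 := Finset.tendsto_Icc_neg.eventually (h1 (ε / 2) (half_pos hε))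
      have h4 := (Metric.tendsto_atTop.1 h2 (ε / 2) (half_pos hε))
      obtain ⟨N, hN⟩ := h4
      filter_upwards [h3, eventually_ge_atTop N] with n hn hnN q hq
      have e1 := hn q hq
      have e2 := hN n hnN
      rw [Real.dist_eq] at e1 e2 ⊢
      rw [Finset.sum_add_distrib, sum_cc] at e1
      unfold uu
      have : ∀ j : ℤ, intervalPotential (2 * (j : ℝ) * L) ((2 * (j : ℝ) + 1) * L) q.1 q.2
        = VV (la L j) (lb L j) q.1 q.2 := fun j => rfl
      simp only [this]
      rw [abs_lt] at e1 e2 ⊢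
      constructor <;> linarith [e1.1, e1.2, e2.1, e2.2]
  intro v hv p hp
  obtain ⟨t, ht, h⟩ := key p hp
  exact ⟨t, mem_nhdsWithin_of_mem_nhds ht, h v hv⟩

lemma summ_all {L : ℝ} (hL : 0 < L) {ρ : ℝ} (hρ : 0 < ρ) (z : ℝ) :
    Summable (fun j : ℤ => VV (la L j) (lb L j) ρ z + cc j) ∧
    Summable (fun j : ℤ => AA (la L j) (lb L j) ρ z) ∧
    Summable (fun j : ℤ => BB (la L j) (lb L j) ρ z) ∧
    Summable (fun j : ℤ => DD (la L j) (lb L j) ρ z) ∧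
    Summable (fun j : ℤ => EE (la L j) (lb L j) ρ z) := by
  obtain ⟨C, hC⟩ := bounds hL (half_pos hρ) (by positivity : 0 < ρ + |z| + 1)
  have h := fun j => hC j ρ z (by linarith) (by linarith [abs_nonneg z]) (by linarith)
  exact ⟨.of_norm_bounded (summ C) fun j => (h j).1, .of_norm_bounded (summ C) fun j => (h j).2.1,
    .of_norm_bounded (summ C) fun j => (h j).2.2.1, .of_norm_bounded (summ C) fun j => (h j).2.2.2.1,
    .of_norm_bounded (summ C) fun j => (h j).2.2.2.2⟩

lemma tsum_dρ {L : ℝ} (hL : 0 < L) {ρ : ℝ} (hρ : 0 < ρ) (z : ℝ) :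
    HasDerivAt (fun y => ∑' j : ℤ, (VV (la L j) (lb L j) y z + cc j))
      (∑' j : ℤ, AA (la L j) (lb L j) ρ z) ρ ∧
    HasDerivAt (fun y => ∑' j : ℤ, AA (la L j) (lb L j) y z)
      (∑' j : ℤ, BB (la L j) (lb L j) ρ z) ρ := by
  obtain ⟨C, hC⟩ := bounds hL (half_pos hρ) (by positivity : 0 < ρ + |z| + 1)
  have hm : ρ ∈ Set.Ioo (ρ / 2) (ρ + |z| + 1) := ⟨by linarith, by linarith [abs_nonneg z]⟩
  have h := fun j y (hy : y ∈ Set.Ioo (ρ / 2) (ρ + |z| + 1)) =>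
    hC j y z hy.1 hy.2 (by linarith)
  obtain ⟨s1, s2, -⟩ := summ_all hL hρ z
  constructor
  · exact hasDerivAt_tsum_of_isPreconnected (summ C) isOpen_Ioo isPreconnected_Ioo
      (g := fun j y => VV (la L j) (lb L j) y z + cc j) (g' := fun j y => AA (la L j) (lb L j) y z)
      (fun j y hy => (VV_dρ _ _ ((half_pos hρ).trans hy.1) z).add_const _)
      (fun j y hy => (h j y hy).2.1) hm s1 hm
  · exact hasDerivAt_tsum_of_isPreconnected (summ C) isOpen_Ioo isPreconnected_Ioo
      (g := fun j y => AA (la L j) (lb L j) y z) (g' := fun j y => BB (la L j) (lb L j) y z)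
      (fun j y hy => AA_dρ _ _ ((half_pos hρ).trans hy.1) z)
      (fun j y hy => (h j y hy).2.2.1) hm s2 hm

lemma tsum_dz {L : ℝ} (hL : 0 < L) {ρ : ℝ} (hρ : 0 < ρ) (z : ℝ) :
    HasDerivAt (fun y => ∑' j : ℤ, (VV (la L j) (lb L j) ρ y + cc j))
      (∑' j : ℤ, DD (la L j) (lb L j) ρ z) z ∧
    HasDerivAt (fun y => ∑' j : ℤ, DD (la L j) (lb L j) ρ y)
      (∑' j : ℤ, EE (la L j) (lb L j) ρ z) z := by
  obtain ⟨C, hC⟩ := bounds hL (half_pos hρ) (by positivity : 0 < ρ + |z| + 1)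
  have hm : z ∈ Set.Ioo (-(ρ + |z| + 1)) (ρ + |z| + 1) := abs_lt.1 (by linarith)
  have h := fun j y (hy : y ∈ Set.Ioo (-(ρ + |z| + 1)) (ρ + |z| + 1)) =>
    hC j ρ y (by linarith) (by linarith [abs_nonneg z]) (abs_lt.2 hy)
  obtain ⟨s1, -, -, s2, -⟩ := summ_all hL hρ z
  constructor
  · exact hasDerivAt_tsum_of_isPreconnected (summ C) isOpen_Ioo isPreconnected_Ioo
      (g := fun j y => VV (la L j) (lb L j) ρ y + cc j) (g' := fun j y => DD (la L j) (lb L j) ρ y)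
      (fun j y hy => (VV_dz _ _ hρ y).add_const _)
      (fun j y hy => (h j y hy).2.2.2.1) hm s1 hm
  · exact hasDerivAt_tsum_of_isPreconnected (summ C) isOpen_Ioo isPreconnected_Ioo
      (g := fun j y => DD (la L j) (lb L j) ρ y) (g' := fun j y => EE (la L j) (lb L j) ρ y)
      (fun j y hy => DD_dz _ _ hρ y)
      (fun j y hy => (h j y hy).2.2.2.2) hm s2 hm

/-- The renormalized soliton sums converge locally uniformly on the half-plane and the
limit satisfies the axisymmetric Laplace equation. -/
theorem soliton_potential_harmonic (L : ℝ) (hL : 0 < L) :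
    ∃ u : ℝ × ℝ → ℝ,
      TendstoLocallyUniformlyOn
        (fun (n : ℕ) (p : ℝ × ℝ) =>
          (∑ j ∈ Finset.Icc (-(n : ℤ)) (n : ℤ),
            intervalPotential (2 * (j : ℝ) * L) ((2 * (j : ℝ) + 1) * L) p.1 p.2)
            + Real.log n)
        u atTop {p : ℝ × ℝ | 0 < p.1} ∧
      ∀ p : ℝ × ℝ, 0 < p.1 →
        deriv (fun s => deriv (fun s' => u (s', p.2)) s) p.1
          + p.1⁻¹ * deriv (fun s => u (s, p.2)) p.1
          + deriv (fun t => deriv (fun t' => u (p.1, t')) t) p.2 = 0 := by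
  refine ⟨uu L, uu_tendsto hL, fun p hp => ?_⟩
  obtain ⟨ρ, z⟩ := p
  simp only at hp ⊢
  have d1 : ∀ s, 0 < s → deriv (fun s' => uu L (s', z)) s
      = ∑' j : ℤ, AA (la L j) (lb L j) s z := fun s hs =>
    ((tsum_dρ hL hs z).1.sub_const _).deriv
  have d2 : (fun t => deriv (fun t' => uu L (ρ, t')) t)
      = fun t => ∑' j : ℤ, DD (la L j) (lb L j) ρ t := funext fun t =>
    ((tsum_dz hL hp t).1.sub_const _).deriv
  have d3 : (fun s => deriv (fun s' => uu L (s', z)) s)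
      =ᶠ[𝓝 ρ] fun s => ∑' j : ℤ, AA (la L j) (lb L j) s z := by
    filter_upwards [lt_mem_nhds hp] with s hs using d1 s hs
  rw [d3.deriv_eq, (tsum_dρ hL hp z).2.deriv, d1 ρ hp, d2, (tsum_dz hL hp z).2.deriv]
  obtain ⟨-, s2, s3, -, s5⟩ := summ_all hL hp z
  rw [← tsum_mul_left, ← s3.tsum_add (s2.mul_left _), ← (s3.add (s2.mul_left _)).tsum_add s5]
  convert tsum_zero with j
  unfold BB
  ring
end
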